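/- For every integer m ≥ 1, the sequence (A_{n,≤m})_{n≥0} is log-convex, i.e. A_{n,≤m} · A_{n+2,≤m} ≥ (A_{n+1,≤m})² for all n ≥ 0, and the sequence (A_{n,≤m}/n!)_{n≥0} is log-concave, i.e. (A_{n,≤m}/n!)·(A_{n+2,≤m}/(n+2)!) ≤ (A_{n+1,≤m}/(n+1)!)² for all n ≥ 0. -/

import Mathlib

/-- The restricted Bell number `B_{n,≤m}`: the number of partitions of an `n`-element set
into nonempty blocks each of size at most `m`. -/
noncomputable def restrictedBell (n m : ℕ) : ℕ :=
  Nat.card {P : Finpartition (Finset.univ : Finset (Fin n)) // ∀ b ∈ P.parts, b.card ≤ m}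

/-- The associated Bell number `B_{n,≥m}`: the number of partitions of an `n`-element set
into nonempty blocks each of size at least `m`. -/
noncomputable def associatedBell (n m : ℕ) : ℕ :=
  Nat.card {P : Finpartition (Finset.univ : Finset (Fin n)) // ∀ b ∈ P.parts, m ≤ b.card}

/-- The Bell number `B_n`: the number of partitions of an `n`-element set. -/
noncomputable def bell (n : ℕ) : ℕ :=
  Nat.card (Finpartition (Finset.univ : Finset (Fin n)))

/-- The restricted factorial number `A_{n,≤m}`: the number of permutations of `n` elements
all of whose cycles have length at most `m`. -/
noncomputable def restrictedFactorial (n m : ℕ) : ℕ :=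
  Nat.card {σ : Equiv.Perm (Fin n) // ∀ x, Function.minimalPeriod σ x ≤ m}

/-- The associated factorial number `A_{n,≥m}`: the number of permutations of `n` elements
all of whose cycles have length at least `m`. -/
noncomputable def associatedFactorial (n m : ℕ) : ℕ :=
  Nat.card {σ : Equiv.Perm (Fin n) // ∀ x, m ≤ Function.minimalPeriod σ x}

open Function in
lemma mp_ins_orbit {α : Type*} [DecidableEq α] [Finite α] (p : α) (τ : Equiv.Perm α)
    (σ : Equiv.Perm (Option α)) (hn : σ none = some p)
    (hs : ∀ x, σ (some x) = if τ x = p then none else some (τ x)) :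
    (∀ i, i < minimalPeriod τ p → σ^[i + 1] none = some (τ^[i] p)) ∧
      minimalPeriod σ none = minimalPeriod τ p + 1 := by
  have hk : 0 < minimalPeriod τ p :=
    minimalPeriod_pos_of_mem_periodicPts (τ.injective.mem_periodicPts p)
  have h1 : ∀ i, i < minimalPeriod τ p → σ^[i + 1] none = some (τ^[i] p) := by
    intro i
    induction i with
    | zero => intro _; simpa using hn
    | succ i ih =>
      intro hi
      rw [iterate_succ_apply', ih (by omega), hs, ← iterate_succ_apply' τ]
      rw [if_neg]
      exact not_isPeriodicPt_of_pos_of_lt_minimalPeriod (Nat.succ_ne_zero i) hi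
  refine ⟨h1, ?_⟩
  obtain ⟨k, hkk⟩ : ∃ k, minimalPeriod τ p = k + 1 := ⟨_, (Nat.succ_pred_eq_of_pos hk).symm⟩
  have h2 : IsPeriodicPt σ (minimalPeriod τ p + 1) none := by
    unfold IsPeriodicPt IsFixedPt
    rw [iterate_succ_apply', hkk, h1 k (by omega), hs, ← iterate_succ_apply' τ, if_pos]
    have := isPeriodicPt_minimalPeriod τ p
    rw [hkk] at this
    exact this
  apply le_antisymm (h2.minimalPeriod_le (by omega))
  by_contra hlt
  push Not at hlt
  have h3 := isPeriodicPt_minimalPeriod σ none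
  have h4 : 0 < minimalPeriod σ none :=
    minimalPeriod_pos_of_mem_periodicPts (σ.injective.mem_periodicPts none)
  obtain ⟨j, hj⟩ : ∃ j, minimalPeriod σ none = j + 1 := ⟨_, (Nat.succ_pred_eq_of_pos h4).symm⟩
  rw [hj] at h3
  have h5 := h1 j (by omega)
  rw [h3.eq] at h5
  simp at h5

open Function in
lemma mp_ins_some {α : Type*} [DecidableEq α] [Finite α] (p : α) (τ : Equiv.Perm α)
    (σ : Equiv.Perm (Option α)) (hn : σ none = some p)
    (hs : ∀ x, σ (some x) = if τ x = p then none else some (τ x)) (x : α) :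
    (minimalPeriod τ x = minimalPeriod τ p ∧ minimalPeriod σ (some x) = minimalPeriod τ p + 1) ∨
      minimalPeriod σ (some x) = minimalPeriod τ x := by
  obtain ⟨h1, h2⟩ := mp_ins_orbit p τ σ hn hs
  have hk : 0 < minimalPeriod τ p :=
    minimalPeriod_pos_of_mem_periodicPts (τ.injective.mem_periodicPts p)
  by_cases hx : ∃ i, τ^[i] p = x
  · left
    obtain ⟨i, rfl⟩ := hx
    refine ⟨minimalPeriod_apply_iterate (τ.injective.mem_periodicPts p) i, ?_⟩
    rw [← iterate_mod_minimalPeriod_eq, ← h1 _ (Nat.mod_lt _ hk),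
      minimalPeriod_apply_iterate (σ.injective.mem_periodicPts _), h2]
  · right
    have h3 : ∀ i, τ^[i] x ≠ p := by
      intro i hi
      apply hx
      have hxk : 0 < minimalPeriod τ x :=
        minimalPeriod_pos_of_mem_periodicPts (τ.injective.mem_periodicPts x)
      refine ⟨minimalPeriod τ x * i - i, ?_⟩
      rw [← hi, ← iterate_add_apply, Nat.sub_add_cancel (Nat.le_mul_of_pos_left _ hxk)]
      exact ((isPeriodicPt_minimalPeriod τ x).mul_const i).eq
    have h4 : ∀ i, σ^[i] (some x) = some (τ^[i] x) := by
      intro i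
      induction i with
      | zero => rfl
      | succ i ih =>
        rw [iterate_succ_apply', ih, hs, ← iterate_succ_apply' τ, if_neg (h3 _)]
    rw [minimalPeriod_eq_minimalPeriod_iff]
    intro n
    simp [IsPeriodicPt, IsFixedPt, h4]

open Function in
noncomputable def cycCount (α : Type) (p : α) (m k : ℕ) : ℕ :=
  Nat.card {σ : Equiv.Perm α // minimalPeriod σ p = k ∧ ∀ x, minimalPeriod σ x ≤ m}

open Function in
lemma mp_conj {α β : Type} (e : α ≃ β) (σ : Equiv.Perm α) (x : α) :
    minimalPeriod (e.permCongr σ) (e x) = minimalPeriod σ x := by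
  rw [minimalPeriod_eq_minimalPeriod_iff]
  intro n
  have : Semiconj e σ (e.permCongr σ) := by
    intro y; simp
  have h := this.iterate_right n x
  simp only [IsPeriodicPt, IsFixedPt]
  rw [← h]
  simp

lemma cycCount_congr {α β : Type} (e : α ≃ β) (p : α) (m k : ℕ) :
    cycCount α p m k = cycCount β (e p) m k := by
  unfold cycCount
  refine Nat.card_congr (Equiv.subtypeEquiv e.permCongr ?_)
  intro σ
  rw [mp_conj]
  refine and_congr Iff.rfl ?_
  rw [← e.forall_congr_right]
  simp only [mp_conj]

open Function in
lemma cycCount_one (n m : ℕ) (hm : 1 ≤ m) :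
    cycCount (Option (Fin n)) none m 1 = restrictedFactorial n m := by
  unfold cycCount restrictedFactorial
  symm
  have hmp : ∀ (τ : Equiv.Perm (Fin n)) x,
      minimalPeriod (Equiv.Perm.decomposeOption.symm (none, τ)) (some x) = minimalPeriod τ x := by
    intro τ x
    rw [minimalPeriod_eq_minimalPeriod_iff]
    intro k
    have : Semiconj some τ (Equiv.Perm.decomposeOption.symm (none, τ)) := by
      intro y; simp
    have h := this.iterate_right k x
    simp only [IsPeriodicPt, IsFixedPt]
    rw [← h]
    simp
  have hmn : ∀ (τ : Equiv.Perm (Fin n)),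
      minimalPeriod (Equiv.Perm.decomposeOption.symm (none, τ)) none = 1 := by
    intro τ
    rw [minimalPeriod_eq_one_iff_isFixedPt]
    simp [IsFixedPt]
  refine Nat.card_congr (Equiv.ofBijective
    (fun τ => ⟨Equiv.Perm.decomposeOption.symm (none, τ.1), hmn _, ?_⟩) ⟨?_, ?_⟩)
  · rintro (_ | x)
    · rw [hmn]; exact hm
    · rw [hmp]; exact τ.2 x
  · intro a b h
    simp only [Subtype.mk.injEq, EmbeddingLike.apply_eq_iff_eq, Prod.mk.injEq, true_and] at h
    exact Subtype.ext h
  · rintro ⟨σ, h1, h2⟩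
    obtain ⟨⟨o, τ⟩, rfl⟩ := Equiv.Perm.decomposeOption.symm.surjective σ
    have ho : o = none := by
      rw [minimalPeriod_eq_one_iff_isFixedPt] at h1
      simpa [Equiv.Perm.decomposeOption, IsFixedPt] using h1
    subst ho
    refine ⟨⟨τ, fun x => ?_⟩, rfl⟩
    rw [← hmp]; exact h2 _

open Function in
lemma cycCount_succ (α : Type) [Fintype α] [DecidableEq α] (m k : ℕ) (hk : 1 ≤ k) (hkm : k + 1 ≤ m) :
    cycCount (Option α) none m (k + 1) = ∑ p : α, cycCount α p m k := by
  unfold cycCount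
  rw [← Nat.card_sigma]
  symm
  have hn : ∀ (p : α) (τ : Equiv.Perm α),
      Equiv.Perm.decomposeOption.symm (some p, τ) none = some p := by
    intro p τ; simp [Equiv.Perm.decomposeOption]
  have hs : ∀ (p : α) (τ : Equiv.Perm α), ∀ x,
      Equiv.Perm.decomposeOption.symm (some p, τ) (some x)
        = if τ x = p then none else some (τ x) := by
    intro p τ x
    simp [Equiv.Perm.decomposeOption, Equiv.swap_apply_def]
  refine Nat.card_congr (Equiv.ofBijective
    (fun q => ⟨Equiv.Perm.decomposeOption.symm (some q.1, q.2.1), ?_, ?_⟩) ⟨?_, ?_⟩)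
  · rw [(mp_ins_orbit q.1 q.2.1 _ (hn _ _) (hs _ _)).2, q.2.2.1]
  · have h0 := (mp_ins_orbit q.1 q.2.1 _ (hn _ _) (hs _ _)).2
    have h1 := q.2.2.1
    rintro (_ | x)
    · omega
    · have h2 := q.2.2.2 x
      rcases mp_ins_some q.1 q.2.1 _ (hn _ _) (hs _ _) x with h | h <;> omega
  · rintro ⟨p, τ, h⟩ ⟨p', τ', h'⟩ heq
    simp only [Subtype.mk.injEq, EmbeddingLike.apply_eq_iff_eq, Prod.mk.injEq,
      Option.some.injEq] at heq
    obtain ⟨rfl, rfl⟩ := heq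
    rfl
  · rintro ⟨σ, h1, h2⟩
    obtain ⟨⟨o, τ⟩, rfl⟩ := Equiv.Perm.decomposeOption.symm.surjective σ
    cases o with
    | none =>
      exfalso
      have : minimalPeriod (Equiv.Perm.decomposeOption.symm (none, τ)) none = 1 := by
        rw [minimalPeriod_eq_one_iff_isFixedPt]
        simp [IsFixedPt]
      omega
    | some p =>
      have h0 := (mp_ins_orbit p τ _ (hn _ _) (hs _ _)).2
      refine ⟨⟨p, τ, by omega, fun x => ?_⟩, rfl⟩
      have h3 := h2 (some x)
      rcases mp_ins_some p τ _ (hn _ _) (hs _ _) x with h | h <;> omega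

lemma cycCount_eq (m k : ℕ) : ∀ n, k + 1 ≤ m →
    cycCount (Option (Fin n)) none m (k + 1) = n.descFactorial k * restrictedFactorial (n - k) m := by
  induction k with
  | zero => intro n h; simp [cycCount_one n m h]
  | succ k ih =>
    intro n h
    rw [cycCount_succ _ _ _ (by omega) h]
    cases n with
    | zero => simp
    | succ n =>
      have : ∀ p : Fin (n + 1), cycCount (Fin (n + 1)) p m (k + 1)
          = n.descFactorial k * restrictedFactorial (n - k) m := by
        intro p
        rw [cycCount_congr (finSuccEquiv' p), finSuccEquiv'_at, ih n (by omega)]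
      simp only [this, Finset.sum_const, Finset.card_univ, Fintype.card_fin, smul_eq_mul]
      rw [Nat.succ_descFactorial_succ, Nat.add_sub_add_right, mul_assoc]

open Function in
lemma rf_rec (n m : ℕ) : restrictedFactorial (n + 1) m =
    ∑ k ∈ Finset.range m, n.descFactorial k * restrictedFactorial (n - k) m := by
  have h : ∀ k ∈ Finset.range m, n.descFactorial k * restrictedFactorial (n - k) m
      = cycCount (Fin (n + 1)) 0 m (k + 1) := by
    intro k hk
    rw [← cycCount_eq m k n (by simpa using hk), cycCount_congr (finSuccEquiv' (0 : Fin (n+1))),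
      finSuccEquiv'_at]
  rw [Finset.sum_congr rfl h, Finset.sum_range]
  unfold cycCount restrictedFactorial
  rw [← Nat.card_sigma]
  symm
  refine Nat.card_congr (Equiv.ofBijective (fun q => ⟨q.2.1, q.2.2.2⟩) ⟨?_, ?_⟩)
  · rintro ⟨i, σ, h, h'⟩ ⟨j, σ', g, g'⟩ heq
    simp only [Subtype.mk.injEq] at heq
    subst heq
    have : i = j := by ext; omega
    subst this
    rfl
  · rintro ⟨σ, h⟩
    have h4 : 0 < minimalPeriod σ 0 :=
      minimalPeriod_pos_of_mem_periodicPts (σ.injective.mem_periodicPts 0)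
    have h5 := h 0
    exact ⟨⟨⟨minimalPeriod σ 0 - 1, by omega⟩, σ, by simp only []; omega, h⟩, rfl⟩

lemma rf_zero (m : ℕ) : restrictedFactorial 0 m = 1 := by
  unfold restrictedFactorial
  rw [Nat.card_eq_one_iff_unique]
  exact ⟨inferInstance, ⟨⟨1, fun x => x.elim0⟩⟩⟩

section analytic
variable (a : ℤ → ℚ) (m : ℕ)

lemma an_pos (hm : 1 ≤ m) (hneg : ∀ k < 0, a k = 0) (h0 : a 0 = 1)
    (hrec : ∀ n : ℤ, (n + 1) * a (n + 1) = ∑ i ∈ Finset.range m, a (n - i)) :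
    ∀ n : ℕ, 0 < a n := by
  intro n
  induction n using Nat.strong_induction_on with
  | _ n ih =>
    cases n with
    | zero => simp [h0]
    | succ n =>
      have h := hrec n
      have hpos : 0 < ∑ i ∈ Finset.range m, a ((n : ℤ) - i) := by
        apply Finset.sum_pos'
        · intro i _
          rcases lt_or_ge ((n : ℤ) - i) 0 with hlt | hge
          · rw [hneg _ hlt]
          · have := ih (n - i) (by omega)
            rw [Nat.cast_sub (by omega)] at this
            exact this.le
        · refine ⟨0, Finset.mem_range.2 hm, ?_⟩
          simpa using ih n (by omega)
      rw [← h] at hpos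
      push_cast at hpos ⊢
      exact pos_of_mul_pos_right hpos (by positivity)

lemma an_lc (hm : 1 ≤ m) (hneg : ∀ k < 0, a k = 0) (h0 : a 0 = 1)
    (hrec : ∀ n : ℤ, (n + 1) * a (n + 1) = ∑ i ∈ Finset.range m, a (n - i)) :
    ∀ N : ℕ, ∀ i j : ℤ, i ≤ j → j + 1 ≤ N → a i * a (j + 1) ≤ a (i + 1) * a j := by
  have hp := an_pos a m hm hneg h0 hrec
  have hnn : ∀ k : ℤ, 0 ≤ a k := by
    intro k
    rcases lt_or_ge k 0 with hk | hk
    · rw [hneg _ hk]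
    · lift k to ℕ using hk; exact (hp k).le
  obtain ⟨l, rfl⟩ : ∃ l, m = l + 1 := ⟨m - 1, by omega⟩
  intro N
  induction N with
  | zero =>
    intro i j hij hj
    push_cast at hj
    rw [hneg i (by omega), zero_mul]
    exact mul_nonneg (hnn _) (hnn _)
  | succ N ih =>
    intro i j hij hj
    push_cast at hj
    rcases Int.lt_or_eq_of_le hj with hj | hj
    · exact ih i j hij (by omega)
    obtain rfl : j = N := by omega
    rcases lt_or_ge i 0 with hi | hi
    · rw [hneg i hi, zero_mul]
      exact mul_nonneg (hnn _) (hnn _)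
    rcases Int.lt_or_eq_of_le hij with hij | rfl
    swap
    · rw [mul_comm]
    have hN : (1 : ℤ) ≤ N := by omega
    have key : a (N - 1) * a (N + 1) ≤ a N * a N := by
      have e1 := hrec N
      have e2 := hrec (N - 1)
      have e2' := e2
      have e3 := hrec (N - 2)
      rw [Finset.sum_range_succ'] at e1 e2
      rw [Finset.sum_range_succ] at e2' e3
      set T := ∑ s ∈ Finset.range l, a ((N : ℤ) - 1 - s) with hT
      set S := ∑ s ∈ Finset.range l, a ((N : ℤ) - 2 - s) with hS
      have t1 : ∑ s ∈ Finset.range l, a ((N : ℤ) - (s + 1 : ℕ)) = T :=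
        Finset.sum_congr rfl fun s _ => by congr 1; push_cast; ring
      have t2 : ∑ s ∈ Finset.range l, a ((N : ℤ) - 1 - (s + 1 : ℕ)) = S :=
        Finset.sum_congr rfl fun s _ => by congr 1; push_cast; ring
      rw [t1] at e1
      rw [t2] at e2
      have hST : a (N - 2 - l) * T ≤ a (N - 1 - l) * S := by
        rw [hT, hS, Finset.mul_sum, Finset.mul_sum]
        refine Finset.sum_le_sum fun s hs => ?_
        have hs := Finset.mem_range.1 hs
        have := ih (N - 2 - l) (N - 2 - s) (by omega) (by omega)
        rw [show (N : ℤ) - 2 - s + 1 = N - 1 - s by ring,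
          show (N : ℤ) - 2 - l + 1 = N - 1 - l by ring] at this
        exact this
      rw [show (N : ℤ) - 1 + 1 = N by ring] at e2 e2'
      rw [show (N : ℤ) - 2 + 1 = N - 1 by ring] at e3
      push_cast at e1 e2 e2' e3
      simp only [sub_zero, sub_add_cancel] at e1 e2 e2' e3
      have q1 := hnn (N - 1)
      have q2 := hnn (N - 1 - l)
      have q3 := hnn (N + 1)
      have hNQ : (1 : ℚ) ≤ N := by exact_mod_cast hN
      generalize a (N - 1) = x at *
      generalize a (N - 1 - l) = u at *
      generalize a (N - 2 - l) = v at *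
      generalize a (N + 1) = z at *
      generalize a N = y at *
      have hv : 0 ≤ y - z := by
        have : (N + 1 : ℚ) * (y - z) = u := by linarith
        rw [← this] at q2
        exact nonneg_of_mul_nonneg_right q2 (by positivity)
      have e3' : (N - 1 : ℚ) * x = S + v := by linarith
      have f1 : (N : ℚ) ^ 2 * (y * y) - ((N : ℚ) ^ 2 - 1) * (x * z)
          = (S + x) * (T + u) - (T + y) * (S + v) := by
        linear_combination (N * y) * e2' + (T + u) * e2 - (N - 1) * x * e1 - (T + y) * e3'
      have f2 : x * (T + u) - y * (S + v) = x * y := by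
        linear_combination - x * e2' + y * e3'
      have f3 : 0 ≤ (N : ℚ) ^ 2 * (y * y - x * z) := by nlinarith
      have := nonneg_of_mul_nonneg_right f3 (by positivity)
      linarith
    have h1 := ih i (N - 1) (by omega) (by omega)
    rw [sub_add_cancel] at h1
    have hx : 0 < a (N - 1) := by
      have := hp (N - 1)
      rwa [Nat.cast_sub (by omega)] at this
    have h2 := mul_le_mul_of_nonneg_left key (hnn i)
    have h3 := mul_le_mul_of_nonneg_right h1 (hnn N)
    refine le_of_mul_le_mul_left ?_ hx
    linarith

lemma an_lcx (hm : 1 ≤ m) (hneg : ∀ k < 0, a k = 0) (h0 : a 0 = 1)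
    (hrec : ∀ n : ℤ, (n + 1) * a (n + 1) = ∑ i ∈ Finset.range m, a (n - i)) (n : ℕ) :
    (n + 1) * a (n + 1) * a (n + 1) ≤ (n + 2) * a (n + 2) * a n := by
  have e1 := hrec n
  have e2 := hrec (n + 1)
  rw [show (n : ℤ) + 1 + 1 = n + 2 by ring] at e2
  push_cast at e1 e2
  rw [show (n : ℚ) + 1 + 1 = n + 2 by ring] at e2
  rw [e1, e2, Finset.sum_mul, Finset.sum_mul]
  refine Finset.sum_le_sum fun i _ => ?_
  have := an_lc a m hm hneg h0 hrec (n + 1) (n - i) n (by omega) (by simp)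
  rwa [show (n : ℤ) - i + 1 = n + 1 - i by ring] at this

end analytic

/-- For `m ≥ 1`, the sequence `(A_{n,≤m})` is log-convex and `(A_{n,≤m}/n!)` is log-concave. -/
theorem restrictedFactorial_logConvex_logConcave (m : ℕ) (hm : 1 ≤ m) :
    (∀ n : ℕ,
      (restrictedFactorial (n + 1) m) ^ 2 ≤
        restrictedFactorial n m * restrictedFactorial (n + 2) m) ∧
    (∀ n : ℕ,
      (restrictedFactorial n m : ℚ) / n.factorial *
          ((restrictedFactorial (n + 2) m : ℚ) / (n + 2).factorial) ≤
        ((restrictedFactorial (n + 1) m : ℚ) / (n + 1).factorial) ^ 2) := by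
  let a : ℤ → ℚ := fun k =>
    if k < 0 then 0 else (restrictedFactorial k.toNat m : ℚ) / k.toNat.factorial
  have ha : ∀ n : ℕ, a n = (restrictedFactorial n m : ℚ) / n.factorial := by
    intro n; simp [a]
  have hneg : ∀ k < 0, a k = 0 := by
    intro k hk; simp [a, hk]
  have h0 : a 0 = 1 := by simp [a, rf_zero]
  have hrec : ∀ n : ℤ, (n + 1) * a (n + 1) = ∑ i ∈ Finset.range m, a (n - i) := by
    intro n
    rcases lt_or_ge n 0 with hn | hn
    · rw [Finset.sum_eq_zero (fun i _ => hneg _ (by omega))]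
      rcases Int.lt_or_eq_of_le (show n + 1 ≤ 0 by omega) with h | h
      · rw [hneg _ h, mul_zero]
      · have : (n : ℚ) + 1 = 0 := by exact_mod_cast h
        rw [this, zero_mul]
    · lift n to ℕ using hn
      have h1 := ha (n + 1)
      push_cast at h1 ⊢
      rw [h1, rf_rec, Nat.factorial_succ]
      have hf : (n.factorial : ℚ) ≠ 0 := by positivity
      have hn1 : (n : ℚ) + 1 ≠ 0 := by positivity
      push_cast
      rw [mul_div_mul_left _ _ hn1 |> fun h => (mul_div_assoc _ _ _).symm.trans h, Finset.sum_div]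
      refine Finset.sum_congr rfl fun i _ => ?_
      rcases lt_or_ge n i with h | h
      · rw [hneg _ (by omega), Nat.descFactorial_of_lt h]; simp
      · have h2 := ha (n - i)
        rw [Nat.cast_sub h] at h2
        rw [h2, ← Nat.factorial_mul_descFactorial h]
        have : (n.descFactorial i : ℚ) ≠ 0 := by
          have : n.descFactorial i ≠ 0 := by rw [Ne, Nat.descFactorial_eq_zero_iff_lt]; omega
          exact_mod_cast this
        push_cast
        field_simp
  have g1 : ∀ n : ℕ, a (n + 1) = (restrictedFactorial (n + 1) m : ℚ) / (n + 1).factorial :=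
    fun n => by rw [← ha (n + 1)]; push_cast; rfl
  have g2 : ∀ n : ℕ, a (n + 2) = (restrictedFactorial (n + 2) m : ℚ) / (n + 2).factorial :=
    fun n => by rw [← ha (n + 2)]; push_cast; rfl
  refine ⟨fun n => ?_, fun n => ?_⟩
  · have h := an_lcx a m hm hneg h0 hrec n
    rw [g1, g2, ha, Nat.factorial_succ (n + 1), Nat.factorial_succ n] at h
    have hf : (0 : ℚ) < n.factorial := by positivity
    have hn1 : (0 : ℚ) < (n : ℚ) + 1 := by positivity
    have hn2 : (0 : ℚ) < (n : ℚ) + 2 := by positivity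
    push_cast at h
    rw [show (n : ℚ) + 1 + 1 = n + 2 by ring] at h
    generalize restrictedFactorial (n + 1) m = B at *
    generalize restrictedFactorial (n + 2) m = C at *
    generalize restrictedFactorial n m = A at *
    have l1 : ((n : ℚ) + 1) * (B / ((n + 1) * n.factorial)) * (B / ((n + 1) * n.factorial))
        = (B ^ 2) / ((n + 1) * n.factorial ^ 2) := by field_simp
    have l2 : ((n : ℚ) + 2) * (C / ((n + 2) * ((n + 1) * n.factorial))) * (A / n.factorial)
        = (A * C) / ((n + 1) * n.factorial ^ 2) := by field_simp
    rw [l1, l2, div_le_div_iff_of_pos_right (by positivity)] at h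
    exact_mod_cast h
  · have h := an_lc a m hm hneg h0 hrec (n + 2) n (n + 1) (by omega) (by push_cast; omega)
    rw [show (n : ℤ) + 1 + 1 = n + 2 by ring, g1, g2, ha] at h
    rw [sq]
    exact h
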